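/- arXiv:1804.06138 — 2 statements merged into one kernel-verified Lean document; each statement's English description precedes it below -/
import Mathlib

section
/- Let q be a prime power and let n be an odd positive integer coprime to q. Then the following statements are equivalent: (1) all monic irreducible factors of x^n − 1 over F_{q^2} are SCRIM; (2) for each prime divisor l of n, all monic irreducible factors of x^l − 1 over F_{q^2} are SCRIM; (3) for each prime divisor l of n, ord_l(q^2) is odd and ord_l(q) is even. -/
open Polynomial

/-- The reciprocal polynomial `f*(x) = x^(deg f) * f(0)⁻¹ * f(1/x)`. -/
noncomputable def crecip {F : Type*} [Field F] (f : F[X]) : F[X] :=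
  C (f.coeff 0)⁻¹ * f.reverse

/-- The conjugate-reciprocal polynomial `f†`, obtained by applying the
conjugation `a ↦ a ^ q` to each coefficient of `f*`. -/
noncomputable def cdagger {F : Type*} [Field F] (q : ℕ) (f : F[X]) : F[X] :=
  (crecip f).sum fun i a => C (a ^ q) * X ^ i

/-- A polynomial is SCRIM if it is monic, irreducible, and self-conjugate-reciprocal. -/
def IsSCRIM {F : Type*} [Field F] (q : ℕ) (f : F[X]) : Prop :=
  f.Monic ∧ Irreducible f ∧ f = cdagger q f

/-- The set `Ω_{q²,n}` of SCRIM factors of `x^n - 1` over `F = F_{q²}`. -/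
def scrimFactors (F : Type*) [Field F] (q n : ℕ) : Set F[X] :=
  {f | IsSCRIM q f ∧ f ∣ X ^ n - 1}

/-- Lifting: odd exponents with `q^j = -1` modulo every prime divisor give one modulo `n`. -/
theorem exists_odd_pow (q : ℕ) : ∀ n : ℕ, Odd n →
    (∀ l : ℕ, l.Prime → l ∣ n → ∃ j, Odd j ∧ (l : ℤ) ∣ (q : ℤ) ^ j + 1) →
    ∃ j, Odd j ∧ (n : ℤ) ∣ (q : ℤ) ^ j + 1 := by
  intro n
  induction n using Nat.recOnMul with
  | zero => intro h; simp at h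
  | one => intro _ _; exact ⟨1, odd_one, by simp⟩
  | prime p hp => intro _ h; exact h p hp dvd_rfl
  | mul a b iha ihb =>
    intro h0 h
    obtain ⟨hae, hbe⟩ := Nat.odd_mul.1 h0
    obtain ⟨i, hi, hia⟩ := iha hae fun l hl hd => h l hl (hd.mul_right b)
    obtain ⟨j, hj, hjb⟩ := ihb hbe fun l hl hd => h l hl (hd.mul_left a)
    -- `a`, `b` both divide `q^(ij) + 1`
    have ha : (a : ℤ) ∣ (q : ℤ) ^ (i * j) + 1 := by
      rw [pow_mul]
      refine hia.trans ?_
      simpa using hj.add_dvd_pow_add_pow ((q : ℤ) ^ i) 1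
    have hb : (b : ℤ) ∣ (q : ℤ) ^ (i * j) + 1 := by
      rw [mul_comm, pow_mul]
      refine hjb.trans ?_
      simpa using hi.add_dvd_pow_add_pow ((q : ℤ) ^ j) 1
    have hK : Odd (i * j) := hi.mul hj
    refine ⟨i * j * a, hK.mul hae, ?_⟩
    set y : ℤ := -(q : ℤ) ^ (i * j) with hy
    have hya : (a : ℤ) ∣ y - 1 := by
      have e : y - 1 = -((q : ℤ) ^ (i * j) + 1) := by rw [hy]; ring
      rw [e]; exact (dvd_neg).2 ha
    have hyb : (b : ℤ) ∣ y - 1 := by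
      have e : y - 1 = -((q : ℤ) ^ (i * j) + 1) := by rw [hy]; ring
      rw [e]; exact (dvd_neg).2 hb
    have hs : (a : ℤ) ∣ ∑ k ∈ Finset.range a, y ^ k := by
      have h1 : (a : ℤ) ∣ ∑ k ∈ Finset.range a, (y ^ k - 1) :=
        Finset.dvd_sum fun k _ => hya.trans (by simpa using sub_dvd_pow_sub_pow y 1 k)
      rw [Finset.sum_sub_distrib] at h1
      simpa using h1
    have hm := mul_dvd_mul hs hyb
    rw [geom_sum_mul, hy, hae.neg_pow, ← pow_mul] at hm
    have e : (q : ℤ) ^ (i * j * a) + 1 = -(-(q : ℤ) ^ (i * j * a) - 1) := by ring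
    rw [e, dvd_neg]
    push_cast
    exact hm

theorem order_iff {q l : ℕ} [Fact l.Prime] (hl : l ≠ 2) (hql : (q : ZMod l) ≠ 0) :
    (∃ j, Odd j ∧ (q : ZMod l) ^ j = -1) ↔
      (Odd (orderOf ((q : ZMod l) ^ 2)) ∧ Even (orderOf (q : ZMod l))) := by
  have h2 : (-1 : ZMod l) ≠ 1 := by
    have : Fact (2 < l) := ⟨lt_of_le_of_ne (Fact.out : l.Prime).two_le (Ne.symm hl)⟩
    exact ZMod.neg_one_ne_one
  constructor
  · rintro ⟨j, hj, h⟩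
    constructor
    · have : orderOf ((q : ZMod l) ^ 2) ∣ j := by
        apply orderOf_dvd_of_pow_eq_one
        rw [← pow_mul, mul_comm, pow_mul, h]; ring
      exact Odd.of_dvd_nat hj this
    · by_contra hodd
      rw [Nat.not_even_iff_odd] at hodd
      have : (-1 : ZMod l) ^ orderOf (q : ZMod l) = 1 := by
        rw [← h, ← pow_mul, mul_comm, pow_mul, pow_orderOf_eq_one, one_pow]
      rw [hodd.neg_one_pow] at this
      exact h2 this
  · rintro ⟨ho, he⟩
    obtain ⟨e, he'⟩ := he
    have hpos : 0 < orderOf (q : ZMod l) := by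
      rw [orderOf_pos_iff, isOfFinOrder_iff_pow_eq_one]
      exact ⟨l - 1, Nat.sub_pos_of_lt (Fact.out : l.Prime).one_lt, ZMod.pow_card_sub_one_eq_one hql⟩
    have h2e : orderOf ((q : ZMod l) ^ 2) = e := by
      rw [orderOf_pow' _ two_ne_zero, he', ← two_mul, Nat.gcd_mul_right_left]
      simp
    refine ⟨e, h2e ▸ ho, ?_⟩
    have hsq : ((q : ZMod l) ^ e) * ((q : ZMod l) ^ e) = 1 := by
      rw [← pow_add, ← he', pow_orderOf_eq_one]
    rcases mul_self_eq_one_iff.1 hsq with h | h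
    · have := Nat.le_of_dvd (by omega) (orderOf_dvd_of_pow_eq_one h)
      omega
    · exact h

theorem cdagger_eq_map {F : Type*} [Field F] {q : ℕ} (σ : F →+* F) (hσ : ∀ a, σ a = a ^ q)
    (f : F[X]) : cdagger q f = (crecip f).map σ := by
  rw [cdagger, Polynomial.map, Polynomial.eval₂_eq_sum]
  simp [hσ]

theorem cdagger_monic {F : Type*} [Field F] {q : ℕ} (σ : F →+* F) (hσ : ∀ a, σ a = a ^ q)
    (f : F[X]) (h0 : f.coeff 0 ≠ 0) :
    (cdagger q f).Monic ∧ (cdagger q f).natDegree = f.natDegree := by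
  rw [cdagger_eq_map σ hσ]
  have ht : f.natTrailingDegree = 0 := natTrailingDegree_eq_zero.2 (Or.inr h0)
  constructor
  · apply Monic.map
    rw [Monic, crecip, leadingCoeff_mul, leadingCoeff_C, reverse_leadingCoeff, trailingCoeff, ht]
    exact inv_mul_cancel₀ h0
  · rw [natDegree_map, crecip, natDegree_C_mul (inv_ne_zero h0), reverse_natDegree, ht, tsub_zero]

theorem aeval_cdagger {F : Type*} [Field F] {q : ℕ} (σ : F →+* F) (hσ : ∀ a, σ a = a ^ q)
    {E : Type*} [Field E] [Algebra F E] (τ : E →+* E) (hτ : ∀ a, τ a = a ^ q)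
    (f : F[X]) (α : E) (hα : α ≠ 0) (h : aeval α f = 0) :
    aeval ((α⁻¹) ^ q) (cdagger q f) = 0 := by
  have hc : (τ.comp (algebraMap F E)) = (algebraMap F E).comp σ := by
    ext a; simp [hσ, hτ]
  let := invertibleOfNonzero hα
  have h1 : eval₂ (algebraMap F E) α⁻¹ f.reverse = 0 := by
    have := (eval₂_reverse_eq_zero_iff (algebraMap F E) α f).2 h
    rwa [invOf_eq_inv] at this
  rw [cdagger_eq_map σ hσ, aeval_def, eval₂_map, ← hc, ← hτ, ← hom_eval₂, crecip, eval₂_mul, h1]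
  simp

theorem scrim_iff {F : Type*} [Field F] {q : ℕ} (σ : F →+* F) (hσ : ∀ a, σ a = a ^ q)
    {E : Type*} [Field E] [Algebra F E] (τ : E →+* E) (hτ : ∀ a, τ a = a ^ q)
    (f : F[X]) (hm : f.Monic) (hi : Irreducible f) (h0 : f.coeff 0 ≠ 0)
    (α : E) (hα : α ≠ 0) (h : aeval α f = 0) :
    IsSCRIM q f ↔ aeval ((α⁻¹) ^ q) f = 0 := by
  have h1 := aeval_cdagger σ hσ τ hτ f α hα h
  constructor
  · rintro ⟨-, -, h2⟩
    rw [h2]; exact h1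
  · intro h2
    refine ⟨hm, hi, ?_⟩
    obtain ⟨m, d⟩ := cdagger_monic σ hσ f h0
    have hd : f ∣ cdagger q f := by
      have hd' := minpoly.dvd F _ h1
      rwa [← minpoly.eq_of_irreducible_of_monic hi h2 hm] at hd'
    exact (eq_of_monic_of_dvd_of_natDegree_le hm m hd d.le).symm

theorem coeff_zero_ne {F : Type*} [Field F] {n : ℕ} (hn : n ≠ 0) {f : F[X]}
    (h : f ∣ X ^ n - 1) : f.coeff 0 ≠ 0 := by
  intro h0
  have : X ∣ (X ^ n - 1 : F[X]) := (X_dvd_iff.2 h0).trans h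
  rw [X_dvd_iff] at this
  simp [coeff_X_pow, hn.symm] at this

theorem exists_frob {q : ℕ} (hq : IsPrimePow q)
    {F : Type*} [Field F] [Fintype F] (hF : Fintype.card F = q ^ 2)
    (E : Type*) [Field E] [Algebra F E] : ∃ τ : E →+* E, ∀ a, τ a = a ^ q := by
  obtain ⟨p, k, hp, hk, rfl⟩ := hq
  have hp' := hp.nat_prime
  have : Fact p.Prime := ⟨hp'⟩
  have : CharP F p := by
    obtain ⟨p', _⟩ := CharP.exists F
    obtain ⟨m, hp2, hc⟩ := FiniteField.card F p'
    have : p' ∣ p := by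
      have : p' ∣ (p ^ k) ^ 2 := by rw [← hF, hc]; exact dvd_pow_self _ m.ne_zero
      exact hp2.dvd_of_dvd_pow (hp2.dvd_of_dvd_pow this)
    have he := (Nat.prime_dvd_prime_iff_eq hp2 hp').1 this
    subst he
    assumption
  have : CharP E p := charP_of_injective_algebraMap (algebraMap F E).injective p
  have : ExpChar E p := ExpChar.prime hp'
  exact ⟨iterateFrobenius E p k, fun a => iterateFrobenius_def ..⟩

theorem scrim_of_dvd {q n : ℕ} (hq : IsPrimePow q)
    {F : Type*} [Field F] [Fintype F] (hF : Fintype.card F = q ^ 2) (hn : n ≠ 0)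
    {j : ℕ} (hj : Odd j) (hd : (n : ℤ) ∣ (q : ℤ) ^ j + 1)
    (f : F[X]) (hm : f.Monic) (hi : Irreducible f) (hf : f ∣ X ^ n - 1) : IsSCRIM q f := by
  obtain ⟨σ, hσ⟩ := exists_frob hq hF F
  obtain ⟨τ, hτ⟩ := exists_frob hq hF (AlgebraicClosure F)
  obtain ⟨α, hα⟩ := IsAlgClosed.exists_aeval_eq_zero (AlgebraicClosure F) f
    (degree_pos_of_irreducible hi).ne'
  have hαn : α ^ n = 1 := by
    have := aeval_eq_zero_of_dvd_aeval_eq_zero hf hα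
    simpa [sub_eq_zero] using this
  have hα0 : α ≠ 0 := by
    rintro rfl; simp [hn] at hαn
  rw [scrim_iff σ hσ τ hτ f hm hi (coeff_zero_ne hn hf) α hα0 hα]
  obtain ⟨c, hc⟩ : n ∣ q ^ j + 1 := by exact_mod_cast hd
  have h1 : α ^ (q ^ j) = α⁻¹ := by
    apply eq_inv_of_mul_eq_one_left
    rw [← pow_succ, hc, pow_mul, hαn, one_pow]
  obtain ⟨i, rfl⟩ := hj
  have h2 : (α⁻¹) ^ q = α ^ ((Fintype.card F) ^ (i + 1)) := by
    rw [← h1, ← pow_mul, hF]; congr 1; ring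
  have h3 : ∀ m : ℕ, aeval (α ^ ((Fintype.card F) ^ m)) f = 0 := by
    intro m
    induction m with
    | zero => simpa using hα
    | succ m ih =>
      rw [pow_succ, pow_mul, ← expand_aeval, FiniteField.expand_card, map_pow, ih]
      exact zero_pow Fintype.card_ne_zero
  rw [h2]; exact h3 _

theorem exists_of_scrim {q l : ℕ} (hq : IsPrimePow q)
    {F : Type*} [Field F] [Fintype F] (hF : Fintype.card F = q ^ 2) [hl : Fact l.Prime]
    (hql : (q : ZMod l) ≠ 0)
    (h : ∀ f : F[X], f.Monic → Irreducible f → f ∣ X ^ l - 1 → IsSCRIM q f) :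
    ∃ j, Odd j ∧ (q : ZMod l) ^ j = -1 := by
  have hl0 : l ≠ 0 := hl.out.ne_zero
  have : NeZero l := ⟨hl0⟩
  have : NeZero (l : F) := by
    constructor
    intro h0
    obtain ⟨p, _⟩ := CharP.exists F
    obtain ⟨m, hp2, hc⟩ := FiniteField.card F p
    have hpl := (Nat.prime_dvd_prime_iff_eq hp2 hl.out).1 ((CharP.cast_eq_zero_iff F p l).1 h0)
    subst hpl
    apply hql
    rw [ZMod.natCast_eq_zero_iff]
    apply hp2.dvd_of_dvd_pow (n := 2)
    rw [← hF, hc]; exact dvd_pow_self _ m.ne_zero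
  let L := CyclotomicField l F
  have : FiniteDimensional F L := IsCyclotomicExtension.finiteDimensional {l} F L
  have : Finite L := Module.finite_of_finite F
  let α : L := IsCyclotomicExtension.zeta l F L
  have hα : IsPrimitiveRoot α l := IsCyclotomicExtension.zeta_spec l F L
  have hα0 : α ≠ 0 := hα.ne_zero hl0
  obtain ⟨σ, hσ⟩ := exists_frob hq hF F
  obtain ⟨τ, hτ⟩ := exists_frob hq hF L
  have hint : IsIntegral F α := IsIntegral.of_finite F α
  have hdvd : minpoly F α ∣ X ^ l - 1 := minpoly.dvd F _ (by simp [hα.pow_eq_one])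
  have hs := h _ (minpoly.monic hint) (minpoly.irreducible hint) hdvd
  rw [scrim_iff σ hσ τ hτ _ (minpoly.monic hint) (minpoly.irreducible hint)
    (coeff_zero_ne hl0 hdvd) α hα0 (minpoly.aeval F α)] at hs
  have hconj : IsConjRoot F α ((α⁻¹) ^ q) :=
    minpoly.eq_of_irreducible_of_monic (minpoly.irreducible hint) hs (minpoly.monic hint)
  obtain ⟨g, hg⟩ := isConjRoot_iff_exists_algEquiv.1 hconj.symm
  obtain ⟨⟨i, hi'⟩, hi⟩ := (FiniteField.bijective_frobeniusAlgEquivOfAlgebraic_pow F L).2 g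
  have h1 : α ^ (q ^ (2 * i)) = (α⁻¹) ^ q := by
    rw [← hg, ← hi]
    simp only [AlgEquiv.coe_pow, FiniteField.coe_frobeniusAlgEquivOfAlgebraic_iterate]
    rw [hF, ← pow_mul]
  have h2 : α ^ (q ^ (2 * i) + q) = 1 := by
    rw [pow_add, h1, ← mul_pow, inv_mul_cancel₀ hα0, one_pow]
  have h3 : (q : ZMod l) ^ (2 * i) + q = 0 := by
    have := (ZMod.natCast_eq_zero_iff _ l).2 (hα.dvd_of_pow_eq_one _ h2)
    exact_mod_cast this
  rcases i with _ | i
  · refine ⟨1, odd_one, ?_⟩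
    simp at h3
    linear_combination h3
  · refine ⟨2 * i + 1, ⟨i, rfl⟩, ?_⟩
    apply mul_left_cancel₀ hql
    linear_combination h3

theorem stmt5 {q n : ℕ} (hq : IsPrimePow q)
    {F : Type*} [Field F] [Fintype F] (hF : Fintype.card F = q ^ 2)
    (hn : Odd n) (hgcd : Nat.Coprime n q) :
    ((∀ f : F[X], f.Monic → Irreducible f → f ∣ X ^ n - 1 → IsSCRIM q f) ↔
       (∀ l : ℕ, l.Prime → l ∣ n →
         ∀ f : F[X], f.Monic → Irreducible f → f ∣ X ^ l - 1 → IsSCRIM q f)) ∧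
    ((∀ l : ℕ, l.Prime → l ∣ n →
         ∀ f : F[X], f.Monic → Irreducible f → f ∣ X ^ l - 1 → IsSCRIM q f) ↔
       (∀ l : ℕ, l.Prime → l ∣ n →
         Odd (orderOf ((q : ZMod l) ^ 2)) ∧ Even (orderOf (q : ZMod l)))) := by
  have hn0 : n ≠ 0 := by rintro rfl; simp at hn
  have hne2 : ∀ l : ℕ, l ∣ n → l ≠ 2 := by
    rintro l hd rfl
    exact (Nat.not_even_iff_odd.2 hn) (even_iff_two_dvd.2 hd)
  have hql : ∀ l : ℕ, l.Prime → l ∣ n → (q : ZMod l) ≠ 0 := by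
    intro l hl hd h0
    have h1 := (ZMod.natCast_eq_zero_iff q l).1 h0
    exact hl.one_lt.ne' (Nat.dvd_one.1 (hgcd ▸ Nat.dvd_gcd hd h1))
  have hcast : ∀ l j : ℕ, (q : ZMod l) ^ j = -1 ↔ (l : ℤ) ∣ (q : ℤ) ^ j + 1 := by
    intro l j
    rw [← ZMod.intCast_zmod_eq_zero_iff_dvd, eq_neg_iff_add_eq_zero]
    push_cast
    rfl
  have h23 : (∀ l : ℕ, l.Prime → l ∣ n →
         ∀ f : F[X], f.Monic → Irreducible f → f ∣ X ^ l - 1 → IsSCRIM q f) →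
      (∀ l : ℕ, l.Prime → l ∣ n → ∃ j, Odd j ∧ (q : ZMod l) ^ j = -1) := by
    intro h l hl hd
    have : Fact l.Prime := ⟨hl⟩
    exact exists_of_scrim hq hF (hql l hl hd) (h l hl hd)
  refine ⟨⟨fun h l hl hd f hm hi hf => h f hm hi (hf.trans ?_), fun h f hm hi hf => ?_⟩,
    fun h l hl hd => ?_, fun h l hl hd f hm hi hf => ?_⟩
  · obtain ⟨c, rfl⟩ := hd
    rw [pow_mul]
    simpa using sub_dvd_pow_sub_pow ((X : F[X]) ^ l) 1 c
  · obtain ⟨j, hj, hd⟩ := exists_odd_pow q n hn fun l hl hd => by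
      obtain ⟨j, hj, hh⟩ := h23 h l hl hd
      exact ⟨j, hj, (hcast l j).1 hh⟩
    exact scrim_of_dvd hq hF hn0 hj hd f hm hi hf
  · have : Fact l.Prime := ⟨hl⟩
    exact (order_iff (hne2 l hd) (hql l hl hd)).1 (h23 h l hl hd)
  · have : Fact l.Prime := ⟨hl⟩
    obtain ⟨j, hj, hh⟩ := (order_iff (hne2 l hd) (hql l hl hd)).2 (h l hl hd)
    exact scrim_of_dvd hq hF hl.ne_zero hj ((hcast l j).1 hh) f hm hi hf
end

section
/- Let q be a power of a prime p, and let n = p^ν · n' where ν ≥ 0 and p does not divide n'. Then the number of Hermitian complementary dual cyclic codes of length n over F_{q^2} is 2^{|Ω_{q^2,n'}| + |Λ_{q^2,n'}|}; in particular, this number is independent of ν. -/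
open Polynomial

/-- The codewords of a cyclic code, viewed as the polynomials of degree `< n`
in the ideal `C` of `F[x]` corresponding to the ideal `C` of `F[x]/⟨x^n - 1⟩`. -/
def codewords {F : Type*} [Field F] (C : Ideal F[X]) (n : ℕ) : Set F[X] :=
  {f | f ∈ C ∧ f.degree < (n : WithBot ℕ)}

/-- The Hermitian dual code `C^⊥H`, as a set of polynomials of degree `< n`. -/
def hermDual {F : Type*} [Field F] (q : ℕ) (C : Ideal F[X]) (n : ℕ) : Set F[X] :=
  {u | u.degree < (n : WithBot ℕ) ∧ ∀ v ∈ C, v.degree < (n : WithBot ℕ) →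
      ∑ i ∈ Finset.range n, u.coeff i * (v.coeff i) ^ q = 0}

/-- The set `Λ_{q²,m}` of unordered pairs `{g, g†}` of conjugate-reciprocal
irreducible monic factors of `x^m - 1` with `g ≠ g†`. -/
def crimPairs (F : Type*) [Field F] (q m : ℕ) : Set (Set F[X]) :=
  {s | ∃ g : F[X], g.Monic ∧ Irreducible g ∧ g ∣ X ^ m - 1 ∧
        g ≠ cdagger q g ∧ s = {g, cdagger q g}}


section Dagger
variable {F : Type*} [Field F]

lemma cd_eq (φ : F →+* F) (q : ℕ) (hφ : ∀ a, φ a = a ^ q) (f : F[X]) :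
    cdagger q f = C (φ (f.coeff 0))⁻¹ * (f.map φ).reverse := by
  have h1 : cdagger q f = (crecip f).map φ := by
    unfold cdagger
    rw [Polynomial.map, eval₂_eq_sum]
    simp [hφ]
  rw [h1, crecip, Polynomial.map_mul, map_C, map_inv₀]
  congr 1
  rw [reverse, reverse, reflect_map, natDegree_map]

lemma cd_mul (φ : F →+* F) (q : ℕ) (hφ : ∀ a, φ a = a ^ q) (f g : F[X]) :
    cdagger q (f * g) = cdagger q f * cdagger q g := by
  simp only [cd_eq φ q hφ, Polynomial.map_mul, reverse_mul_of_domain, mul_coeff_zero, map_mul,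
    mul_inv]
  ring

lemma map_coeff0_ne (φ : F →+* F) {f : F[X]} (h0 : f.coeff 0 ≠ 0) : (f.map φ).coeff 0 ≠ 0 := by
  rw [coeff_map]; simpa using h0

lemma cd_monic (φ : F →+* F) (q : ℕ) (hφ : ∀ a, φ a = a ^ q) {f : F[X]} (h0 : f.coeff 0 ≠ 0) :
    (cdagger q f).Monic := by
  rw [cd_eq φ q hφ, Monic, leadingCoeff_mul, leadingCoeff_C, reverse_leadingCoeff, trailingCoeff,
    natTrailingDegree_eq_zero.2 (Or.inr (map_coeff0_ne φ h0)), coeff_map]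
  exact inv_mul_cancel₀ (by simpa using h0)

lemma cd_coeff0 (φ : F →+* F) (q : ℕ) (hφ : ∀ a, φ a = a ^ q) {f : F[X]} (hf : f.Monic) :
    (cdagger q f).coeff 0 = (φ (f.coeff 0))⁻¹ := by
  rw [cd_eq φ q hφ, coeff_C_mul, coeff_zero_reverse, leadingCoeff_map, hf.leadingCoeff]
  simp

lemma reverse_rev {f : F[X]} (h0 : f.coeff 0 ≠ 0) : f.reverse.reverse = f := by
  have h : f.reverse.natDegree = f.natDegree := by
    rw [reverse_natDegree, natTrailingDegree_eq_zero.2 (Or.inr h0)]; simp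
  conv_lhs => rw [reverse, h, reverse, reflect_reflect]

lemma cd_cd (φ : F →+* F) (q : ℕ) (hφ : ∀ a, φ a = a ^ q) (hφ2 : ∀ a, φ (φ a) = a)
    {f : F[X]} (hf : f.Monic) (h0 : f.coeff 0 ≠ 0) :
    cdagger q (cdagger q f) = f := by
  have hh : φ.comp φ = RingHom.id F := by ext a; simp [hφ2]
  rw [cd_eq φ q hφ (cdagger q f), cd_coeff0 φ q hφ hf, cd_eq φ q hφ f, Polynomial.map_mul, map_C,
    reverse_mul_of_domain, reverse_C, map_inv₀ φ, hφ2, inv_inv]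
  have : (f.map φ).reverse.map φ = f.reverse := by
    rw [reverse, reverse, reflect_map, natDegree_map, Polynomial.map_map, hh, Polynomial.map_id]
  rw [this, reverse_rev h0, ← mul_assoc, ← C_mul, mul_inv_cancel₀ h0]
  simp

lemma cd_one (φ : F →+* F) (q : ℕ) (hφ : ∀ a, φ a = a ^ q) : cdagger q (1 : F[X]) = 1 := by
  rw [cd_eq φ q hφ, Polynomial.map_one, ← C_1, reverse_C]
  simp

lemma cd_Xn (φ : F →+* F) (q : ℕ) (hφ : ∀ a, φ a = a ^ q) {n : ℕ} (hn : 0 < n) :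
    cdagger q (X ^ n - 1 : F[X]) = X ^ n - 1 := by
  have h : (X ^ n - 1 : F[X]).natDegree = n := by
    rw [← C_1]; exact natDegree_X_pow_sub_C
  rw [cd_eq φ q hφ]
  simp only [Polynomial.map_sub, Polynomial.map_pow, map_X, Polynomial.map_one]
  rw [reverse, h, reflect_sub, reflect_monomial, reflect_one, revAt_le le_rfl]
  simp [coeff_X_pow, hn.ne]

lemma cd_natDegree (φ : F →+* F) (q : ℕ) (hφ : ∀ a, φ a = a ^ q) {f : F[X]} (h0 : f.coeff 0 ≠ 0) :
    (cdagger q f).natDegree = f.natDegree := by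
  rw [cd_eq φ q hφ, natDegree_C_mul (by simpa using h0), reverse_natDegree,
    natTrailingDegree_eq_zero.2 (Or.inr (map_coeff0_ne φ h0)), natDegree_map]
  simp

lemma cd_irred (φ : F →+* F) (q : ℕ) (hφ : ∀ a, φ a = a ^ q) (hφ2 : ∀ a, φ (φ a) = a)
    {f : F[X]} (hf : f.Monic) (h0 : f.coeff 0 ≠ 0) (hi : Irreducible f) :
    Irreducible (cdagger q f) := by
  have hm := cd_monic φ q hφ h0
  have hd := cd_natDegree φ q hφ h0
  have hc0 : (cdagger q f).coeff 0 ≠ 0 := by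
    rw [cd_coeff0 φ q hφ hf]; simpa using h0
  have hne : cdagger q f ≠ 1 := by
    intro h
    rw [h, natDegree_one] at hd
    exact hi.natDegree_pos.ne hd
  rw [hm.irreducible_iff_natDegree]
  refine ⟨hne, ?_⟩
  intro a b ha hb hab
  have h1 : cdagger q a * cdagger q b = f := by
    rw [← cd_mul φ q hφ, hab, cd_cd φ q hφ hφ2 hf h0]
  have ha0 : a.coeff 0 ≠ 0 := by
    intro h; apply hc0; rw [← hab, mul_coeff_zero, h, zero_mul]
  have hb0 : b.coeff 0 ≠ 0 := by
    intro h; apply hc0; rw [← hab, mul_coeff_zero, h, mul_zero]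
  rw [← cd_natDegree φ q hφ ha0, ← cd_natDegree φ q hφ hb0]
  exact (hf.irreducible_iff_natDegree.1 hi).2 _ _ (cd_monic φ q hφ ha0)
    (cd_monic φ q hφ hb0) h1

lemma Xn_dvd (N k : ℕ) : (X ^ N - 1 : F[X]) ∣ X ^ (N * k) - 1 := by
  rw [pow_mul]; simpa using sub_dvd_pow_sub_pow (X ^ N : F[X]) 1 k

lemma coeff0_of_dvd {n : ℕ} (hn : 0 < n) {f : F[X]} (h : f ∣ X ^ n - 1) : f.coeff 0 ≠ 0 := by
  obtain ⟨k, hk⟩ := h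
  intro h0
  have := congrArg (fun p => coeff p 0) hk
  simp [h0, coeff_X_pow, hn.ne] at this

lemma reflect_cong {N : ℕ} (hN : 0 < N) (D : ℕ) (f : F[X]) (hf : f.natDegree ≤ D) :
    (X ^ N - 1 : F[X]) ∣ X ^ D * expand F (N - 1) f - reflect D f := by
  refine induction_with_natDegree_le
    (fun f => (X ^ N - 1 : F[X]) ∣ X ^ D * expand F (N - 1) f - reflect D f) D ?_ ?_ ?_ f hf
  · simp
  · intro n r hr hn
    rw [reflect_C_mul_X_pow, revAt_le hn, map_mul, expand_C, map_pow, expand_X]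
    have h : X ^ D * (C r * (X ^ (N - 1)) ^ n) - C r * X ^ (D - n)
        = C r * X ^ (D - n) * (X ^ (N * n) - 1) := by
      have e : (X : F[X]) ^ D * (X ^ (N - 1)) ^ n = X ^ (D - n) * X ^ (N * n) := by
        rw [← pow_mul, ← pow_add, ← pow_add]
        congr 1
        obtain ⟨k, rfl⟩ : ∃ k, D = n + k := ⟨D - n, by omega⟩
        obtain ⟨j, rfl⟩ : ∃ j, N = j + 1 := ⟨N - 1, by omega⟩
        simp; ring
      linear_combination C r * e
    rw [h]
    exact (Xn_dvd N n).mul_left _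
  · intro f g _ _ h1 h2
    rw [map_add, reflect_add]
    convert dvd_add h1 h2 using 1
    ring

/-- conjugation composed with inversion of the variable, modulo `X ^ N - 1` -/
noncomputable def sg (φ : F →+* F) (N : ℕ) : F[X] →+* F[X] :=
  (expand F (N - 1)).toRingHom.comp (mapRingHom φ)

lemma sg_apply (φ : F →+* F) (N : ℕ) (f : F[X]) : sg φ N f = expand F (N - 1) (f.map φ) := rfl

lemma dvd_sg_iff (φ : F →+* F) (q : ℕ) (hφ : ∀ a, φ a = a ^ q) {N : ℕ} (hN : 0 < N)
    {k f : F[X]} (hk : k ∣ X ^ N - 1) (h0 : f.coeff 0 ≠ 0) :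
    k ∣ sg φ N f ↔ k ∣ cdagger q f := by
  have h := hk.trans (reflect_cong hN (f.map φ).natDegree (f.map φ) le_rfl)
  have hu : IsUnit (C (φ (f.coeff 0))⁻¹) := by
    rw [isUnit_C]; simpa using h0
  have hX : IsCoprime k (X ^ (f.map φ).natDegree) := by
    apply IsCoprime.pow_right
    obtain ⟨l, hl⟩ := hk
    refine ⟨-l, X ^ (N - 1), ?_⟩
    have : (X : F[X]) ^ (N - 1) * X = X ^ N := by rw [← pow_succ]; congr 1; omega
    rw [this]; linear_combination hl
  rw [cd_eq φ q hφ, hu.dvd_mul_left, sg_apply]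
  change _ ∣ _ - reverse (f.map φ) at h
  constructor
  · intro h1
    exact (dvd_sub_right (h1.mul_left _)).1 h
  · intro h1
    exact hX.dvd_of_dvd_mul_left ((dvd_sub_left h1).1 h)

lemma dvd_sg_cd (φ : F →+* F) (q : ℕ) (hφ : ∀ a, φ a = a ^ q) (hφ2 : ∀ a, φ (φ a) = a)
    {N : ℕ} (hN : 0 < N) {f g : F[X]} (hfm : f.Monic) (hf : f ∣ X ^ N - 1) (hgm : g.Monic)
    (hg : g ∣ X ^ N - 1) : cdagger q f ∣ sg φ N g ↔ f ∣ g := by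
  have hf0 := coeff0_of_dvd hN hf
  have hg0 := coeff0_of_dvd hN hg
  have hcf : cdagger q f ∣ X ^ N - 1 := by
    obtain ⟨k, hk⟩ := hf
    rw [← cd_Xn φ q hφ hN, hk, cd_mul φ q hφ]
    exact dvd_mul_right _ _
  rw [dvd_sg_iff φ q hφ hN hcf hg0]
  constructor
  · rintro ⟨k, hk⟩
    have := congrArg (cdagger q) hk
    rw [cd_mul φ q hφ, cd_cd φ q hφ hφ2 hfm hf0, cd_cd φ q hφ hφ2 hgm hg0] at this
    exact ⟨_, this⟩
  · rintro ⟨k, rfl⟩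
    rw [cd_mul φ q hφ]
    exact dvd_mul_right _ _

end Dagger

section Pairing
variable {F : Type*} [Field F]

lemma natDegree_lt_of_degree {N : ℕ} (hN : 0 < N) {r : F[X]} (h : r.degree < N) :
    r.natDegree < N := by
  by_cases hr : r = 0
  · simpa [hr] using hN
  · exact (natDegree_lt_iff_degree_lt hr).2 h

lemma M_monic {N : ℕ} (hN : 0 < N) : (X ^ N - 1 : F[X]).Monic := by
  rw [← C_1]; exact monic_X_pow_sub_C _ hN.ne'

lemma M_degree {N : ℕ} (hN : 0 < N) : (X ^ N - 1 : F[X]).degree = N := by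
  rw [← C_1]; exact degree_X_pow_sub_C hN _

lemma Xpow_mod {N : ℕ} (hN : 0 < N) (e : ℕ) :
    (X ^ e : F[X]) %ₘ (X ^ N - 1) = X ^ (e % N) := by
  have h : (X ^ (e % N) : F[X]) %ₘ (X ^ N - 1) = X ^ (e % N) := by
    rw [modByMonic_eq_self_iff (M_monic hN), M_degree hN, degree_X_pow]
    exact_mod_cast Nat.mod_lt _ hN
  rw [← h]
  apply modByMonic_eq_of_dvd_sub (M_monic hN)
  have : (X ^ e : F[X]) - X ^ (e % N) = X ^ (e % N) * (X ^ (N * (e / N)) - 1) := by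
    rw [mul_sub, ← pow_add, Nat.mod_add_div, mul_one]
  rw [this]
  exact (Xn_dvd N _).mul_left _

/-- constant coefficient modulo `X ^ N - 1` -/
noncomputable def tauL (F : Type*) [Field F] (N : ℕ) : F[X] →ₗ[F] F :=
  (lcoeff F 0).comp (modByMonicHom (X ^ N - 1 : F[X]))

lemma tauL_apply (N : ℕ) (w : F[X]) : tauL F N w = (w %ₘ (X ^ N - 1)).coeff 0 := rfl

lemma tauL_congr {N : ℕ} (hN : 0 < N) {u v : F[X]} (h : (X ^ N - 1 : F[X]) ∣ u - v) :
    tauL F N u = tauL F N v := by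
  rw [tauL_apply, tauL_apply, modByMonic_eq_of_dvd_sub (M_monic hN) h]

lemma tauL_zero {N : ℕ} (hN : 0 < N) {u : F[X]} (h : (X ^ N - 1 : F[X]) ∣ u) :
    tauL F N u = 0 := by
  rw [tauL_congr hN (v := 0) (by simpa using h), map_zero]

lemma tauL_mul_X {N : ℕ} (hN : 0 < N) {r : F[X]} (hr : r.degree < N) {k : ℕ} (hk : k < N) :
    tauL F N (r * X ^ ((N - 1) * k)) = r.coeff k := by
  have hr' : r = ∑ i ∈ Finset.range N, C (r.coeff i) * X ^ i := by
    apply as_sum_range_C_mul_X_pow'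
    exact natDegree_lt_of_degree hN hr
  have h1 : ∀ i ∈ Finset.range N, tauL F N (C (r.coeff i) * X ^ i * X ^ ((N - 1) * k))
      = if i = k then r.coeff i else 0 := by
    intro i hi
    rw [Finset.mem_range] at hi
    rw [mul_assoc, ← pow_add, ← smul_eq_C_mul, map_smul, tauL_apply, Xpow_mod hN, coeff_X_pow]
    have : 0 = (i + (N - 1) * k) % N ↔ i = k := by
      have e : i + (N - 1) * k + k = i + N * k := by
        obtain ⟨j, rfl⟩ : ∃ j, N = j + 1 := ⟨N - 1, by omega⟩
        simp; ring
      have h2 : (i + (N - 1) * k + k) % N = i := by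
        rw [e, Nat.add_mul_mod_self_left, Nat.mod_eq_of_lt hi]
      constructor
      · intro h
        rw [Nat.add_mod, ← h, zero_add, Nat.mod_mod, Nat.mod_eq_of_lt hk] at h2
        exact h2.symm
      · rintro rfl
        have : i + (N - 1) * i = N * i := by omega
        rw [this, Nat.mul_mod_right]
    simp [this]
  conv_lhs => rw [hr', Finset.sum_mul, map_sum]
  rw [Finset.sum_congr rfl h1]
  simp [hk]

lemma pairing_eq (φ : F →+* F) (q : ℕ) (hφ : ∀ a, φ a = a ^ q) {N : ℕ} (hN : 0 < N)
    {u v : F[X]} (hu : u.degree < N) (hv : v.degree < N) :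
    ∑ i ∈ Finset.range N, u.coeff i * (v.coeff i) ^ q = tauL F N (u * sg φ N v) := by
  have hv' : v = ∑ i ∈ Finset.range N, C (v.coeff i) * X ^ i := by
    apply as_sum_range_C_mul_X_pow'
    exact natDegree_lt_of_degree hN hv
  conv_rhs => rw [hv', map_sum, Finset.mul_sum, map_sum]
  apply Finset.sum_congr rfl
  intro i hi
  rw [Finset.mem_range] at hi
  have : u * sg φ N (C (v.coeff i) * X ^ i) = C (φ (v.coeff i)) * (u * X ^ ((N - 1) * i)) := by
    rw [sg_apply]
    simp only [Polynomial.map_mul, map_C, Polynomial.map_pow, map_X, map_mul, expand_C, map_pow,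
      expand_X]
    rw [pow_mul]; ring
  rw [this, ← smul_eq_C_mul, map_smul, tauL_mul_X hN hu hi, hφ, smul_eq_mul, mul_comm]

lemma sg_M (φ : F →+* F) (N : ℕ) : (X ^ N - 1 : F[X]) ∣ sg φ N (X ^ N - 1) := by
  rw [sg_apply]
  simp only [Polynomial.map_sub, Polynomial.map_pow, map_X, Polynomial.map_one, map_sub, map_pow,
    expand_X, map_one]
  rw [← pow_mul, mul_comm]
  exact Xn_dvd _ _

lemma dual_iff (φ : F →+* F) (q : ℕ) (hφ : ∀ a, φ a = a ^ q) {N : ℕ} (hN : 0 < N)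
    {g : F[X]} (hg : g ∣ X ^ N - 1) {u : F[X]} (hu : u.degree < N) :
    u ∈ hermDual q (Ideal.span {g}) N ↔ (X ^ N - 1 : F[X]) ∣ u * sg φ N g := by
  have hM := M_monic (F := F) hN
  constructor
  · rintro ⟨-, h⟩
    have key : ∀ v : F[X], g ∣ v → tauL F N (u * sg φ N v) = 0 := by
      intro v hv
      have hd : (v %ₘ (X ^ N - 1)).degree < N := by
        rw [← M_degree (F := F) hN]; exact degree_modByMonic_lt _ hM
      have hdiv := modByMonic_add_div v (X ^ N - 1 : F[X])
      have hgv : g ∣ v %ₘ (X ^ N - 1) := by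
        rw [← hdiv] at hv
        exact (dvd_add_left (hg.mul_right _)).1 hv
      have h1 := h _ (Ideal.mem_span_singleton.2 hgv) hd
      rw [pairing_eq φ q hφ hN hu hd] at h1
      rw [← h1]
      apply tauL_congr hN
      rw [← mul_sub, ← map_sub]
      have : v - v %ₘ (X ^ N - 1) = (X ^ N - 1) * (v /ₘ (X ^ N - 1)) := by
        linear_combination -hdiv
      rw [this, map_mul]
      exact ((sg_M φ N).mul_right _).mul_left _
    rw [← modByMonic_eq_zero_iff_dvd hM]
    set w := u * sg φ N g with hw
    have hd : (w %ₘ (X ^ N - 1)).degree < N := by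
      rw [← M_degree (F := F) hN]; exact degree_modByMonic_lt _ hM
    ext k
    rw [coeff_zero]
    by_cases hk : k < N
    · rw [← tauL_mul_X hN hd hk]
      have h2 := key (g * X ^ k) (dvd_mul_right _ _)
      have h3 : u * sg φ N (g * X ^ k) = w * X ^ ((N - 1) * k) := by
        rw [map_mul, hw, mul_assoc, sg_apply φ N (X ^ k)]
        simp [pow_mul]
      rw [h3] at h2
      rw [← h2]
      apply tauL_congr hN
      rw [← sub_mul]
      apply Dvd.dvd.mul_right
      refine ⟨-(w /ₘ (X ^ N - 1)), ?_⟩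
      linear_combination modByMonic_add_div w (X ^ N - 1 : F[X])
    · apply coeff_eq_zero_of_degree_lt
      refine hd.trans_le ?_
      exact_mod_cast not_lt.1 hk
  · intro h
    refine ⟨hu, ?_⟩
    intro v hv hvd
    rw [pairing_eq φ q hφ hN hu hvd]
    obtain ⟨k, rfl⟩ := Ideal.mem_span_singleton.1 hv
    apply tauL_zero hN
    rw [map_mul, ← mul_assoc]
    exact h.mul_right _

lemma hcd_iff (φ : F →+* F) (q : ℕ) (hφ : ∀ a, φ a = a ^ q) {N : ℕ} (hN : 0 < N)
    {g h : F[X]} (hgh : g * h = X ^ N - 1) :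
    codewords (Ideal.span {g}) N ∩ hermDual q (Ideal.span {g}) N = {0} ↔
      IsCoprime h (sg φ N g) := by
  have hM := M_monic (F := F) hN
  have hg : g ∣ X ^ N - 1 := ⟨h, hgh.symm⟩
  have hne : g * h ≠ 0 := by rw [hgh]; exact hM.ne_zero
  have hg0 := left_ne_zero_of_mul hne
  have hh0 := right_ne_zero_of_mul hne
  constructor
  · intro H
    apply isCoprime_of_irreducible_dvd (fun hh => hh0 hh.1)
    intro d hd ⟨k, hk⟩ hdg
    -- u = g * k
    have hk0 : k ≠ 0 := by rintro rfl; simp at hk; exact hh0 hk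
    have hu : (g * k).degree < N := by
      rw [← M_degree (F := F) hN, ← hgh, hk, degree_mul, degree_mul, degree_mul]
      have := degree_pos_of_irreducible hd
      rw [degree_eq_natDegree hg0, degree_eq_natDegree hk0, degree_eq_natDegree hd.ne_zero] at *
      norm_cast at *
      omega
    have hmem : g * k ∈ codewords (Ideal.span {g}) N ∩ hermDual q (Ideal.span {g}) N := by
      refine ⟨⟨Ideal.mem_span_singleton.2 (dvd_mul_right _ _), hu⟩, ?_⟩
      rw [dual_iff φ q hφ hN hg hu, ← hgh, hk]
      obtain ⟨l, hl⟩ := hdg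
      rw [hl]
      exact ⟨l, by ring⟩
    rw [H] at hmem
    exact mul_ne_zero hg0 hk0 hmem
  · intro hc
    ext u
    simp only [Set.mem_singleton_iff]
    constructor
    · rintro ⟨⟨hu1, hu2⟩, hu3⟩
      rw [dual_iff φ q hφ hN hg hu2] at hu3
      obtain ⟨k, rfl⟩ := Ideal.mem_span_singleton.1 hu1
      rw [← hgh, mul_assoc] at hu3
      have h1 := hc.dvd_of_dvd_mul_right ((mul_dvd_mul_iff_left hg0).1 hu3)
      have h2 : (X ^ N - 1 : F[X]) ∣ g * k := by
        rw [← hgh]; exact mul_dvd_mul_left _ h1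
      rw [← M_degree (F := F) hN] at hu2
      exact eq_zero_of_dvd_of_degree_lt h2 hu2
    · rintro rfl
      have h0 : (0 : F[X]).degree < (N : WithBot ℕ) := by simp
      refine ⟨⟨Ideal.zero_mem _, h0⟩, ?_⟩
      rw [dual_iff φ q hφ hN hg h0]
      simp

end Pairing

section Counting
variable {F : Type*} [Field F]

open Classical in
/-- product of the `P`-th powers of the members of `S` in `U` -/
noncomputable def GU (S : Finset F[X]) (P : ℕ) (U : Set F[X]) : F[X] :=
  ∏ f ∈ S with f ∈ U, f ^ P

lemma GU_compl (S : Finset F[X]) (P : ℕ) (U : Set F[X]) :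
    GU S P U * GU S P Uᶜ = (∏ f ∈ S, f) ^ P := by
  classical
  rw [← Finset.prod_pow]
  unfold GU
  simp only [Set.mem_compl_iff]
  convert Finset.prod_filter_mul_prod_filter_not S (fun f => f ∈ U) (fun f => f ^ P)

lemma eq_of_irr_dvd {f g : F[X]} (hf : f.Monic) (hg : g.Monic) (hfi : Irreducible f)
    (hgi : Irreducible g) (h : f ∣ g) : f = g :=
  eq_of_monic_of_associated hf hg (hfi.associated_of_dvd hgi h)

lemma dvd_GU {S : Finset F[X]} (hS : ∀ f ∈ S, f.Monic ∧ Irreducible f) {P : ℕ} (hP : 0 < P)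
    {U : Set F[X]} {f : F[X]} (hf : f ∈ S) : f ∣ GU S P U ↔ f ∈ U := by
  classical
  constructor
  · intro h
    obtain ⟨a, ha, hfa⟩ := ((hS f hf).2.prime.dvd_finsetProd_iff _).1 h
    rw [Finset.mem_filter] at ha
    have := (hS f hf).2.prime.dvd_of_dvd_pow hfa
    rw [eq_of_irr_dvd (hS f hf).1 (hS a ha.1).1 (hS f hf).2 (hS a ha.1).2 this]
    exact ha.2
  · intro h
    exact (dvd_pow_self f hP.ne').trans
      (Finset.dvd_prod_of_mem (fun f => f ^ P) (Finset.mem_filter.2 ⟨hf, h⟩))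

lemma GU_monic {S : Finset F[X]} (hS : ∀ f ∈ S, f.Monic ∧ Irreducible f) {P : ℕ}
    {U : Set F[X]} : (GU S P U).Monic := by
  classical
  apply monic_prod_of_monic
  intro f hf
  exact ((hS f (Finset.mem_filter.1 hf).1).1).pow _

lemma mem_filt {A : Type*} {S : Finset A} {p : A → Prop} {d : DecidablePred p} {f : A}
    (h : f ∈ @Finset.filter A p d S) : f ∈ S ∧ p f := Finset.mem_filter.1 h

theorem code_iff (φ : F →+* F) (q : ℕ) (hφ : ∀ a, φ a = a ^ q) (hφ2 : ∀ a, φ (φ a) = a)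
    {S : Finset F[X]} {n' P N : ℕ} (hn' : 0 < n') (hP : 0 < P) (hN : 0 < N)
    (hS : ∀ f, f ∈ S ↔ f.Monic ∧ Irreducible f ∧ f ∣ X ^ n' - 1)
    (hprod : ∏ f ∈ S, f = X ^ n' - 1) (hM : (X ^ n' - 1 : F[X]) ^ P = X ^ N - 1)
    (hdag : ∀ f ∈ S, cdagger q f ∈ S) (hdd : ∀ f ∈ S, cdagger q (cdagger q f) = f)
    (I : Ideal F[X]) :
    ((X : F[X]) ^ N - 1 ∈ I ∧ codewords I N ∩ hermDual q I N = {0}) ↔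
      ∃ U : Set F[X], U ⊆ S ∧ (∀ f ∈ U, cdagger q f ∈ U) ∧ I = Ideal.span {GU S P U} := by
  have hSi : ∀ f ∈ S, f.Monic ∧ Irreducible f := fun f hf =>
    ⟨((hS f).1 hf).1, ((hS f).1 hf).2.1⟩
  have hSM : ∀ f ∈ S, f ^ P ∣ X ^ N - 1 := fun f hf => by
    rw [← hM]; exact pow_dvd_pow_of_dvd ((hS f).1 hf).2.2 _
  have hSM1 : ∀ f ∈ S, f ∣ X ^ N - 1 := fun f hf => (dvd_pow_self f hP.ne').trans (hSM f hf)
  constructor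
  · rintro ⟨hMI, hI⟩
    obtain ⟨g0, hg0⟩ := (IsPrincipalIdealRing.principal I).principal
    have hg0' : I = Ideal.span {g0} := hg0
    have hg00 : g0 ≠ 0 := by
      rintro rfl
      rw [hg0', Ideal.mem_span_singleton, zero_dvd_iff] at hMI
      exact (M_monic hN).ne_zero hMI
    obtain ⟨g, hgm, hgI⟩ : ∃ g : F[X], g.Monic ∧ I = Ideal.span {g} := by
      refine ⟨g0 * C g0.leadingCoeff⁻¹, monic_mul_leadingCoeff_inv hg00, ?_⟩
      rw [hg0', Ideal.span_singleton_mul_right_unit]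
      rw [isUnit_C]; simpa using hg00
    rw [hgI] at hMI hI
    obtain ⟨h, hgh⟩ := Ideal.mem_span_singleton.1 hMI
    rw [hcd_iff φ q hφ hN hgh.symm] at hI
    have hgd : g ∣ X ^ N - 1 := ⟨h, hgh⟩
    have key : ∀ f ∈ S, f ∣ g → (cdagger q f) ^ P ∣ g := by
      intro f hf hfg
      have h1 : cdagger q f ∣ sg φ N g :=
        (dvd_sg_cd φ q hφ hφ2 hN (hSi f hf).1 (hSM1 f hf) hgm hgd).2 hfg
      have hp := (hSi _ (hdag f hf)).2.prime
      have h2 : ¬ cdagger q f ∣ h := fun h2 => hp.not_isUnit (hI.isUnit_of_dvd' h2 h1)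
      have h3 := hSM _ (hdag f hf)
      rw [hgh] at h3
      exact hp.pow_dvd_of_dvd_mul_right P h2 h3
    have key2 : ∀ f ∈ S, f ∣ g → cdagger q f ∣ g := fun f hf hfg =>
      (dvd_pow_self _ hP.ne').trans (key f hf hfg)
    refine ⟨{f | f ∈ S ∧ f ∣ g}, fun f hf => hf.1,
      fun f hf => ⟨hdag f hf.1, key2 f hf.1 hf.2⟩, ?_⟩
    rw [hgI, Ideal.span_singleton_eq_span_singleton]
    apply associated_of_dvd_dvd
    · have h1 : g ∣ GU S P {f | f ∈ S ∧ f ∣ g} * GU S P {f | f ∈ S ∧ f ∣ g}ᶜ := by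
        rw [GU_compl, hprod, hM]; exact hgd
      refine IsCoprime.dvd_of_dvd_mul_right ?_ h1
      apply IsCoprime.prod_right
      intro f hf
      have hf := mem_filt hf
      apply IsCoprime.pow_right
      apply IsCoprime.symm
      rw [(hSi f hf.1).2.coprime_iff_not_dvd]
      exact fun hh => hf.2 ⟨hf.1, hh⟩
    · apply Finset.prod_dvd_of_coprime
      · intro a ha b hb hab
        have ha' := (mem_filt ha).1
        have hb' := (mem_filt hb).1
        apply IsCoprime.pow
        rw [(hSi a ha').2.coprime_iff_not_dvd]
        intro hd
        exact hab (eq_of_irr_dvd (hSi a ha').1 (hSi b hb').1 (hSi a ha').2 (hSi b hb').2 hd)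
      · intro f hf
        obtain ⟨hf1, -, hf2⟩ := mem_filt hf
        have := key _ (hdag f hf1) (key2 f hf1 hf2)
        rwa [hdd f hf1] at this
  · rintro ⟨U, hUS, hU, rfl⟩
    have hgh : GU S P U * GU S P Uᶜ = X ^ N - 1 := by rw [GU_compl, hprod, hM]
    refine ⟨Ideal.mem_span_singleton.2 ⟨_, hgh.symm⟩, ?_⟩
    rw [hcd_iff φ q hφ hN hgh]
    apply isCoprime_of_irreducible_dvd (fun hh => (GU_monic hSi).ne_zero hh.1)
    intro z0 hz0 hz1 hz2
    obtain ⟨z, hz, hzm⟩ : ∃ z : F[X], Associated z0 z ∧ z.Monic :=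
      ⟨z0 * C z0.leadingCoeff⁻¹,
        associated_mul_unit_right _ _ (by rw [isUnit_C]; simpa using hz0.ne_zero),
        monic_mul_leadingCoeff_inv hz0.ne_zero⟩
    rw [hz.dvd_iff_dvd_left] at hz1 hz2
    have hzi := hz.irreducible hz0
    have hzS : z ∈ S := by
      rw [hS]
      refine ⟨hzm, hzi, ?_⟩
      apply hzi.prime.dvd_of_dvd_pow (n := P)
      rw [hM, ← hgh]
      exact hz1.mul_left _
    have hzU : z ∈ Uᶜ := (dvd_GU hSi hP hzS).1 hz1
    have hfS := hdag z hzS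
    rw [← hdd z hzS, dvd_sg_cd φ q hφ hφ2 hN (hSi _ hfS).1 (hSM1 _ hfS) (GU_monic hSi)
      ⟨_, hgh.symm⟩, dvd_GU hSi hP hfS] at hz2
    have := hU _ hz2
    rw [hdd z hzS] at this
    exact hzU this

/-- number of stable subsets -/
theorem count_codes {A : Type*} {B : Type*} (S : Set A) (hfin : S.Finite) (d : A → A)
    (hdag : ∀ f ∈ S, d f ∈ S) (hdd : ∀ f ∈ S, d (d f) = f) (Φ : Set A → B)
    (hΦ : ∀ U V : Set A, U ⊆ S → V ⊆ S → Φ U = Φ V → U = V) :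
    {I : B | ∃ U : Set A, U ⊆ S ∧ (∀ f ∈ U, d f ∈ U) ∧ I = Φ U}.ncard =
      2 ^ ({f | f ∈ S ∧ f = d f}.ncard + {s : Set A | ∃ g ∈ S, g ≠ d g ∧ s = {g, d g}}.ncard) := by
  set Λ := {s : Set A | ∃ g ∈ S, g ≠ d g ∧ s = {g, d g}} with hΛ
  set Ω := {f | f ∈ S ∧ f = d f} with hΩ
  set O := {s : Set A | ∃ g ∈ S, s = {g, d g}} with hO
  have hOfin : O.Finite := by
    apply (hfin.image (fun g => ({g, d g} : Set A))).subset
    rintro s ⟨g, hg, rfl⟩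
    exact ⟨g, hg, rfl⟩
  have hOeq : O = (fun f => ({f} : Set A)) '' Ω ∪ Λ := by
    ext s
    constructor
    · rintro ⟨g, hg, rfl⟩
      by_cases h : g = d g
      · left; exact ⟨g, ⟨hg, h⟩, by simp [← h]⟩
      · right; exact ⟨g, hg, h, rfl⟩
    · rintro (⟨g, ⟨hg, h⟩, rfl⟩ | ⟨g, hg, -, rfl⟩)
      · exact ⟨g, hg, by simp [← h]⟩
      · exact ⟨g, hg, rfl⟩
  have hdisj : Disjoint ((fun f => ({f} : Set A)) '' Ω) Λ := by
    rw [Set.disjoint_left]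
    rintro _ ⟨f, -, rfl⟩ ⟨g, -, hne, h⟩
    dsimp only at h
    have h1 : g ∈ ({f} : Set A) := by rw [h]; simp
    have h2 : d g ∈ ({f} : Set A) := by rw [h]; simp
    exact hne (h1.trans h2.symm)
  have hOcard : O.ncard = Ω.ncard + Λ.ncard := by
    rw [hOeq, Set.ncard_union_eq hdisj (hOfin.subset (by rw [hOeq]; exact Set.subset_union_left))
      (hOfin.subset (by rw [hOeq]; exact Set.subset_union_right)),
      Set.ncard_image_of_injective _ Set.singleton_injective]
  have hsub : ∀ 𝒰 ⊆ O, ⋃₀ 𝒰 ⊆ S := by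
    rintro 𝒰 h f ⟨s, hs, hf⟩
    obtain ⟨g, hg, rfl⟩ := h hs
    rcases hf with rfl | rfl
    · exact hg
    · exact hdag _ hg
  have horb : ∀ s ∈ O, ∀ f ∈ s, s = {f, d f} := by
    rintro _ ⟨g, hg, rfl⟩ f (rfl | rfl)
    · rfl
    · rw [hdd g hg, Set.pair_comm]
  have hmem : ∀ 𝒰 ⊆ O, ∀ f ∈ S, f ∈ ⋃₀ 𝒰 ↔ ({f, d f} : Set A) ∈ 𝒰 := by
    intro 𝒰 h f hf
    constructor
    · rintro ⟨s, hs, hfs⟩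
      rwa [← horb s (h hs) f hfs]
    · intro hs
      exact ⟨_, hs, by simp⟩
  rw [← hOcard, ← Set.ncard_powerset O hOfin]
  have hinj : Set.InjOn (fun 𝒰 : Set (Set A) => Φ (⋃₀ 𝒰)) (𝒫 O) := by
    intro 𝒰 h𝒰 𝒱 h𝒱 h
    have hU := hΦ _ _ (hsub _ h𝒰) (hsub _ h𝒱) h
    ext s
    constructor
    · intro hs
      obtain ⟨g, hg, rfl⟩ := h𝒰 hs
      rw [← hmem _ h𝒱 g hg, ← hU, hmem _ h𝒰 g hg]; exact hs
    · intro hs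
      obtain ⟨g, hg, rfl⟩ := h𝒱 hs
      rw [← hmem _ h𝒰 g hg, hU, hmem _ h𝒱 g hg]; exact hs
  rw [← Set.ncard_image_of_injOn hinj]
  congr 1
  ext I
  constructor
  · rintro ⟨U, hUS, hU, rfl⟩
    refine ⟨{s | s ∈ O ∧ s ⊆ U}, fun s hs => hs.1, ?_⟩
    dsimp only
    congr 1
    ext f
    constructor
    · rintro ⟨s, hs, hf⟩
      exact hs.2 hf
    · intro hf
      refine ⟨{f, d f}, ⟨⟨f, hUS hf, rfl⟩, ?_⟩, by simp⟩
      rintro x (rfl | rfl)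
      · exact hf
      · exact hU _ hf
  · rintro ⟨𝒰, h𝒰, rfl⟩
    refine ⟨⋃₀ 𝒰, hsub _ h𝒰, ?_, rfl⟩
    rintro f ⟨s, hs, hf⟩
    refine ⟨s, hs, ?_⟩
    rw [horb s (h𝒰 hs) f hf]; simp

end Counting

theorem stmt17 {p m ν n' q : ℕ} (hp : p.Prime) (hm : 0 < m) (hq : q = p ^ m)
    {F : Type*} [Field F] [Fintype F] (hF : Fintype.card F = q ^ 2)
    (hn' : 0 < n') (hpn' : ¬ p ∣ n') :
    {C : Ideal F[X] | (X : F[X]) ^ (p ^ ν * n') - 1 ∈ C ∧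
        codewords C (p ^ ν * n') ∩ hermDual q C (p ^ ν * n') = {0}}.ncard =
      2 ^ ((scrimFactors F q n').ncard + (crimPairs F q n').ncard) := by
  classical
  haveI : Fact p.Prime := ⟨hp⟩
  haveI : CharP F p := by
    obtain ⟨r, hr⟩ := CharP.exists F
    have hrp : r.Prime := CharP.char_is_prime F r
    haveI : Fact r.Prime := ⟨hrp⟩
    obtain ⟨k, -, hk⟩ := FiniteField.card F r
    have h1 : r ∣ p ^ (m * 2) := by
      rw [pow_mul, ← hq, ← hF, hk]
      exact dvd_pow_self r k.pos.ne'
    have : r = p := (Nat.prime_dvd_prime_iff_eq hrp hp).1 (hrp.dvd_of_dvd_pow h1)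
    rwa [← this]
  let φ : F →+* F := iterateFrobenius F p m
  have hφ : ∀ a, φ a = a ^ q := by
    intro a; rw [hq]; exact iterateFrobenius_def p m a
  have hφ2 : ∀ a, φ (φ a) = a := by
    intro a
    rw [hφ, hφ, ← pow_mul, ← sq, ← hF, FiniteField.pow_card]
  have hP : 0 < p ^ ν := pow_pos hp.pos _
  have hN : 0 < p ^ ν * n' := Nat.mul_pos hP hn'
  have hM : (X ^ n' - 1 : F[X]) ^ (p ^ ν) = X ^ (p ^ ν * n') - 1 := by
    rw [sub_pow_char_pow, one_pow, ← pow_mul, mul_comm]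
  have hne : (X ^ n' - 1 : F[X]) ≠ 0 := (M_monic hn').ne_zero
  have hsq : Squarefree (X ^ n' - 1 : F[X]) := by
    apply Separable.squarefree
    rw [X_pow_sub_one_separable_iff]
    rwa [Ne, CharP.cast_eq_zero_iff F p]
  let S : Finset F[X] := (UniqueFactorizationMonoid.normalizedFactors (X ^ n' - 1 : F[X])).toFinset
  have hS : ∀ f, f ∈ S ↔ f.Monic ∧ Irreducible f ∧ f ∣ X ^ n' - 1 := by
    intro f
    rw [Multiset.mem_toFinset, Polynomial.mem_normalizedFactors_iff hne]
    tauto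
  have hprod : ∏ f ∈ S, f = X ^ n' - 1 := by
    have hnd := (UniqueFactorizationMonoid.squarefree_iff_nodup_normalizedFactors hne).1 hsq
    have h1 : ∏ f ∈ S, f = (UniqueFactorizationMonoid.normalizedFactors (X ^ n' - 1 : F[X])).prod := by
      rw [Finset.prod_multiset_count, Finset.prod_congr rfl]
      intro f hf
      rw [Multiset.count_eq_one_of_mem hnd (Multiset.mem_toFinset.1 hf), pow_one]
    have h2 := UniqueFactorizationMonoid.prod_normalizedFactors hne
    rw [← h1] at h2
    refine eq_of_monic_of_associated ?_ (M_monic hn') h2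
    exact monic_prod_of_monic _ _ fun f hf => ((hS f).1 hf).1
  have h0 : ∀ f ∈ S, f.coeff 0 ≠ 0 := fun f hf => coeff0_of_dvd hn' ((hS f).1 hf).2.2
  have hdag : ∀ f ∈ S, cdagger q f ∈ S := by
    intro f hf
    obtain ⟨h1, h2, k, hk⟩ := (hS f).1 hf
    rw [hS]
    refine ⟨cd_monic φ q hφ (h0 f hf), cd_irred φ q hφ hφ2 h1 (h0 f hf) h2, ?_⟩
    rw [← cd_Xn φ q hφ hn', hk, cd_mul φ q hφ]
    exact dvd_mul_right _ _
  have hdd : ∀ f ∈ S, cdagger q (cdagger q f) = f := fun f hf =>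
    cd_cd φ q hφ hφ2 ((hS f).1 hf).1 (h0 f hf)
  have hSi : ∀ f ∈ S, f.Monic ∧ Irreducible f := fun f hf =>
    ⟨((hS f).1 hf).1, ((hS f).1 hf).2.1⟩
  simp_rw [code_iff φ q hφ hφ2 hn' hP hN hS hprod hM hdag hdd]
  have hcount := count_codes (S : Set F[X]) S.finite_toSet (cdagger q) hdag hdd
    (fun U => Ideal.span {GU S (p ^ ν) U}) (by
      have aux : ∀ U V : Set F[X], U ⊆ S →
          Ideal.span {GU S (p ^ ν) U} = Ideal.span {GU S (p ^ ν) V} → U ⊆ V := by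
        intro U V hU h f hf
        rw [Ideal.span_singleton_eq_span_singleton] at h
        rw [← dvd_GU hSi hP (hU hf), ← h.dvd_iff_dvd_right, dvd_GU hSi hP (hU hf)]
        exact hf
      intro U V hU hV h
      exact (aux U V hU h).antisymm (aux V U hV h.symm))
  rw [hcount]
  congr 3
  · ext f
    simp only [scrimFactors, IsSCRIM, Set.mem_setOf_eq, Finset.mem_coe, hS]
    tauto
  · ext s
    simp only [crimPairs, Set.mem_setOf_eq, Finset.mem_coe, hS, and_assoc]
end
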